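/- arXiv:2208.05633 — 9 statements merged into one kernel-verified Lean document; each statement's English description precedes it below -/
import Mathlib

section
/- Let α and β be probability measures on a measurable space Ω, let L > 0, and let f : Ω → ℝ be a measurable function, integrable with respect to both α and β, satisfying 0 ≤ f(x) ≤ L for all x ∈ Ω. Then KL(α‖β) ≥ (6/(5L²))·(∫ f dα − ∫ f dβ)². -/
/-!
For probability measures, Gibbs' inequality `KL(α‖β_g) ≥ 0` applied to the exponential tilt `β_g`
of `β` yields the Donsker–Varadhan bound `KL(α‖β) ≥ ∫ g dα - log ∫ exp g dβ`. Take
`g = t (f - ∫ f dβ)`: Hoeffding's lemma bounds the log-moment by `t² L² / 8`, and with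
`Δ = ∫ f dα - ∫ f dβ` the optimal choice `t = 4 Δ / L²` gives the Pinsker-type bound
`KL(α‖β) ≥ 2 Δ² / L²`, which is stronger than the claim since `6/5 ≤ 2`.
-/

open MeasureTheory
open scoped Classical

/-- Kullback–Leibler divergence: `∫ log (dα/dβ) dα` when `α ≪ β` (and the log-likelihood
ratio is integrable), `+∞` otherwise. -/
noncomputable def klDiv {Ω : Type*} [MeasurableSpace Ω] (α β : Measure Ω) : EReal :=
  if α ≪ β ∧ Integrable (llr α β) α then ((∫ x, llr α β x ∂α : ℝ) : EReal) else ⊤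

/-- The easy half of the Donsker–Varadhan variational formula. -/
lemma integral_sub_log_integral_exp_le {Ω : Type*} [MeasurableSpace Ω] {α β : Measure Ω}
    [IsProbabilityMeasure α] [IsProbabilityMeasure β] (hac : α ≪ β)
    (hint : Integrable (llr α β) α) {g : Ω → ℝ} (hgα : Integrable g α)
    (hgβ : Integrable (fun x ↦ Real.exp (g x)) β) :
    ∫ x, g x ∂α - Real.log (∫ x, Real.exp (g x) ∂β) ≤ ∫ x, llr α β x ∂α := by
  have hprob : IsProbabilityMeasure (β.tilted g) := isProbabilityMeasure_tilted hgβ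
  have hgibbs := InformationTheory.integral_llr_add_sub_measure_univ_nonneg
    (hac.trans (absolutelyContinuous_tilted hgβ))
    (integrable_llr_tilted_right hac hgα hint hgβ)
  rw [integral_llr_tilted_right hac hgα hgβ hint] at hgibbs
  simp only [probReal_univ] at hgibbs
  linarith

theorem stmt_0 {Ω : Type*} [MeasurableSpace Ω] (α β : Measure Ω)
    [IsProbabilityMeasure α] [IsProbabilityMeasure β]
    (L : ℝ) (hL : 0 < L) (f : Ω → ℝ) (hf : Measurable f)
    (hfα : Integrable f α) (hfβ : Integrable f β)
    (hf0 : ∀ x, 0 ≤ f x) (hfL : ∀ x, f x ≤ L) :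
    ((6 / (5 * L ^ 2) * (∫ x, f x ∂α - ∫ x, f x ∂β) ^ 2 : ℝ) : EReal) ≤ klDiv α β := by
  unfold klDiv
  split_ifs with h
  swap
  · exact le_top
  obtain ⟨hac, hint⟩ := h
  rw [EReal.coe_le_coe_iff]
  set m := ∫ x, f x ∂β with hm
  set Δ := ∫ x, f x ∂α - m with hΔ
  set t := 4 * Δ / L ^ 2 with ht
  have hsub := ProbabilityTheory.hasSubgaussianMGF_of_mem_Icc (μ := β) hf.aemeasurable
    (Filter.Eventually.of_forall fun x ↦ (⟨hf0 x, hfL x⟩ : f x ∈ Set.Icc 0 L))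
  have hexp := hsub.integrable_exp_mul t
  have hmgf := hsub.mgf_le t
  have hdv := integral_sub_log_integral_exp_le hac hint
    (g := fun x ↦ t * (f x - m)) ((hfα.sub (integrable_const m)).const_mul t) hexp
  have hlog : Real.log (∫ x, Real.exp (t * (f x - m)) ∂β) ≤ L ^ 2 / 4 * t ^ 2 / 2 := by
    rw [Real.log_le_iff_le_exp (integral_exp_pos hexp)]
    refine hmgf.trans_eq ?_
    congr 1
    simp only [sub_zero, NNReal.coe_pow, NNReal.coe_div, coe_nnnorm, NNReal.coe_ofNat,
      Real.norm_eq_abs, abs_of_pos hL]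
    ring
  have hlin : ∫ x, t * (f x - m) ∂α = t * Δ := by
    rw [integral_const_mul, integral_sub hfα (integrable_const m)]
    simp [hΔ]
  have hopt : t * Δ - L ^ 2 / 4 * t ^ 2 / 2 = 2 * (Δ ^ 2 / L ^ 2) := by
    rw [ht]
    field_simp
    ring
  have hconst : 6 / (5 * L ^ 2) * Δ ^ 2 = 6 / 5 * (Δ ^ 2 / L ^ 2) := by
    field_simp
  have hnonneg : 0 ≤ Δ ^ 2 / L ^ 2 := by positivity
  linarith
end

section
/- Let d, n ≥ 1 be integers, let φ_1, …, φ_n ∈ ℝ^d with φ_i ≠ 0 for at least one i, let Δ > 0, and let Λ_1, …, Λ_n be real symmetric positive definite d×d matrices. Then the infimum of Σ_{i=1}^n x_iᵀ Λ_i x_i over all x = (x_1, …, x_n) ∈ (ℝ^d)^n satisfying Σ_{i=1}^n |φ_iᵀ x_i| ≥ Δ equals Δ² / (Σ_{i=1}^n φ_iᵀ Λ_i^{-1} φ_i), and this infimum is attained. -/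
/-!
Write `S = ∑ i, φᵢᵀ Λᵢ⁻¹ φᵢ`, which is positive because some `φᵢ ≠ 0`. Nonnegativity of the quadratic
form of `Λᵢ` at `xᵢ - t Λᵢ⁻¹ φᵢ` gives `2 t φᵢᵀ xᵢ ≤ xᵢᵀ Λᵢ xᵢ + t² φᵢᵀ Λᵢ⁻¹ φᵢ` for every real `t`
(`two_mul_dotProduct_le`). For `t ≥ 0`, using this with both `t` and `-t` bounds `2 t |φᵢᵀ xᵢ|`;
summing over `i` at `t = Δ / S` yields the lower bound `Δ² / S`. Equality holds at
`xᵢ = (Δ / S) Λᵢ⁻¹ φᵢ`.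
-/

open Matrix

/-- Completing the square: a weighted Young inequality for the form of a positive definite matrix
and its inverse. -/
lemma two_mul_dotProduct_le {d : ℕ} {M : Matrix (Fin d) (Fin d) ℝ} (hM : M.PosDef)
    (f x : Fin d → ℝ) (t : ℝ) :
    2 * t * (f ⬝ᵥ x) ≤ x ⬝ᵥ M *ᵥ x + t ^ 2 * (f ⬝ᵥ M⁻¹ *ᵥ f) := by
  have hdet : IsUnit M.det := (Matrix.isUnit_iff_isUnit_det M).1 hM.isUnit
  have hMt : Mᵀ = M := by simpa using hM.isHermitian.eq
  have hMf : M *ᵥ (M⁻¹ *ᵥ f) = f := by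
    rw [mulVec_mulVec, mul_nonsing_inv _ hdet, one_mulVec]
  have hcross : (M⁻¹ *ᵥ f) ⬝ᵥ M *ᵥ x = f ⬝ᵥ x := by
    rw [dotProduct_mulVec, ← mulVec_transpose, hMt, hMf]
  have h := hM.posSemidef.dotProduct_mulVec_nonneg (x - t • (M⁻¹ *ᵥ f))
  simp only [star_trivial, mulVec_sub, mulVec_smul, hMf, sub_dotProduct, dotProduct_sub,
    smul_dotProduct, dotProduct_smul, smul_eq_mul, hcross] at h
  rw [dotProduct_comm x f, dotProduct_comm (M⁻¹ *ᵥ f) f] at h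
  linarith

theorem stmt_1 {d n : ℕ} (hd : 1 ≤ d) (hn : 1 ≤ n)
    (φ : Fin n → Fin d → ℝ) (hφ : ∃ i, φ i ≠ 0) (Δ : ℝ) (hΔ : 0 < Δ)
    (Λ : Fin n → Matrix (Fin d) (Fin d) ℝ)
    (hsymm : ∀ i, (Λ i).IsSymm) (hpos : ∀ i, (Λ i).PosDef) :
    IsLeast
      {y : ℝ | ∃ x : Fin n → Fin d → ℝ,
        Δ ≤ ∑ i, |φ i ⬝ᵥ x i| ∧ y = ∑ i, x i ⬝ᵥ (Λ i).mulVec (x i)}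
      (Δ ^ 2 / ∑ i, φ i ⬝ᵥ (Λ i)⁻¹.mulVec (φ i)) := by
  have hq : ∀ i, 0 ≤ φ i ⬝ᵥ (Λ i)⁻¹ *ᵥ φ i := fun i => by
    simpa using (hpos i).inv.posSemidef.dotProduct_mulVec_nonneg (φ i)
  have hS : 0 < ∑ i, φ i ⬝ᵥ (Λ i)⁻¹ *ᵥ φ i := by
    obtain ⟨i, hi⟩ := hφ
    refine Finset.sum_pos' (fun i _ => hq i) ⟨i, Finset.mem_univ i, ?_⟩
    simpa using (hpos i).inv.dotProduct_mulVec_pos hi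
  set S := ∑ i, φ i ⬝ᵥ (Λ i)⁻¹ *ᵥ φ i with hSdef
  have ht : 0 < Δ / S := div_pos hΔ hS
  constructor
  · refine ⟨fun i => (Δ / S) • ((Λ i)⁻¹ *ᵥ φ i), ?_, ?_⟩
    · have h : ∀ i, |φ i ⬝ᵥ (Δ / S) • ((Λ i)⁻¹ *ᵥ φ i)|
          = Δ / S * (φ i ⬝ᵥ (Λ i)⁻¹ *ᵥ φ i) := fun i => by
        rw [dotProduct_smul, smul_eq_mul, abs_of_nonneg (mul_nonneg ht.le (hq i))]
      simp only [h]
      rw [← Finset.mul_sum, ← hSdef, div_mul_cancel₀ _ hS.ne']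
    · have h : ∀ i, ((Δ / S) • ((Λ i)⁻¹ *ᵥ φ i)) ⬝ᵥ Λ i *ᵥ ((Δ / S) • ((Λ i)⁻¹ *ᵥ φ i))
          = (Δ / S) ^ 2 * (φ i ⬝ᵥ (Λ i)⁻¹ *ᵥ φ i) := fun i => by
        have hdet : IsUnit (Λ i).det := (Matrix.isUnit_iff_isUnit_det _).1 (hpos i).isUnit
        rw [mulVec_smul, mulVec_mulVec, mul_nonsing_inv _ hdet, one_mulVec, smul_dotProduct,
          dotProduct_smul, smul_eq_mul, smul_eq_mul, dotProduct_comm]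
        ring
      simp only [h]
      rw [← Finset.mul_sum, ← hSdef]
      field_simp
  · rintro y ⟨x, hx, rfl⟩
    have h : ∀ i, 2 * (Δ / S) * |φ i ⬝ᵥ x i|
        ≤ x i ⬝ᵥ Λ i *ᵥ x i + (Δ / S) ^ 2 * (φ i ⬝ᵥ (Λ i)⁻¹ *ᵥ φ i) := fun i => by
      have h1 := two_mul_dotProduct_le (hpos i) (φ i) (x i) (Δ / S)
      have h2 := two_mul_dotProduct_le (hpos i) (φ i) (x i) (-(Δ / S))
      rcases abs_cases (φ i ⬝ᵥ x i) with ⟨h3, _⟩ | ⟨h3, _⟩ <;> rw [h3] <;> linarith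
    have hsum := Finset.sum_le_sum fun i (_ : i ∈ Finset.univ) => h i
    rw [← Finset.mul_sum, Finset.sum_add_distrib, ← Finset.mul_sum, ← hSdef] at hsum
    have hm := mul_le_mul_of_nonneg_left hx (mul_pos two_pos ht).le
    have e1 : 2 * (Δ / S) * Δ = 2 * (Δ ^ 2 / S) := by ring
    have e2 : (Δ / S) ^ 2 * S = Δ ^ 2 / S := by field_simp
    linarith
end

section
/- Let M and M' be two linear discounted MDPs on (S, A) with common feature map φ : S×A → ℝ^d and common discount γ ∈ (0,1), with parameters (θ_M, μ_M) and (θ_{M'}, μ_{M'}) respectively, and let π : S → A be any deterministic policy. Then ‖V^π_M − V^π_{M'}‖_∞ ≤ ‖Q^π_M − Q^π_{M'}‖_∞ ≤ (1/(1−γ))·max_{(s,a)∈S×A} |φ(s,a)ᵀ(θ_M − θ_{M'} + γ·Σ_{s'∈S} (μ_M(s') − μ_{M'}(s'))·V^π_M(s'))|. -/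
/-!
Write `D` for the sup-distance of the two `Q`-functions and `E` for the maximal model error on the
right-hand side. Linearity of both MDPs in the common features gives
`Q s a - Q' s a = φ(s,a)ᵀ(θ - θ' + γ ∑ (μ - μ') V) + γ ∑ p' s a s' (V s' - V' s')`,
where the cross term `γ ∑ p' V` has been added and subtracted. As `p' s a` is a probability vector
and `V - V'` is a restriction of `Q - Q'` along `π`, the last sum is at most `D` in absolute value.
Hence `D ≤ E + γ D`, which rearranges to the claim.
-/

open Matrix Finset

/-- Pairing a feature vector `f` with the parameter error, in terms of rewards and transition
probabilities. -/
lemma dotProduct_param_error {S : Type*} [Fintype S] {d : ℕ} (f θ θ' : Fin d → ℝ)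
    (μ μ' : S → Fin d → ℝ) (γ : ℝ) (V : S → ℝ) :
    (f ⬝ᵥ fun i => θ i - θ' i + γ * ∑ s', (μ s' i - μ' s' i) * V s') =
      f ⬝ᵥ θ - f ⬝ᵥ θ' + γ * ∑ s', (f ⬝ᵥ μ s' - f ⬝ᵥ μ' s') * V s' := by
  have hvec : (fun i => θ i - θ' i + γ * ∑ s', (μ s' i - μ' s' i) * V s') =
      θ - θ' + γ • ∑ s', V s' • (μ s' - μ' s') := by
    ext i
    simp [Finset.sum_apply, mul_comm]
  rw [hvec, dotProduct_add, dotProduct_sub, dotProduct_smul, dotProduct_sum]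
  simp [dotProduct_smul, dotProduct_sub, mul_comm]

theorem stmt_6 {S A : Type*} [Fintype S] [Fintype A] [Nonempty S] [Nonempty A]
    {d : ℕ} (φ : S → A → Fin d → ℝ) (γ : ℝ) (hγ : γ ∈ Set.Ioo (0 : ℝ) 1)
    (p p' : S → A → S → ℝ) (r r' : S → A → ℝ)
    (hp0 : ∀ s a s', 0 ≤ p s a s') (hp1 : ∀ s a, ∑ s', p s a s' = 1)
    (hp0' : ∀ s a s', 0 ≤ p' s a s') (hp1' : ∀ s a, ∑ s', p' s a s' = 1)
    (θ θ' : Fin d → ℝ) (μ μ' : S → Fin d → ℝ)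
    (hr : ∀ s a, r s a = φ s a ⬝ᵥ θ) (hP : ∀ s a s', p s a s' = φ s a ⬝ᵥ μ s')
    (hr' : ∀ s a, r' s a = φ s a ⬝ᵥ θ') (hP' : ∀ s a s', p' s a s' = φ s a ⬝ᵥ μ' s')
    (π : S → A) (V V' : S → ℝ) (Q Q' : S → A → ℝ)
    (hQ : ∀ s a, Q s a = r s a + γ * ∑ s', p s a s' * V s')
    (hV : ∀ s, V s = Q s (π s))
    (hQ' : ∀ s a, Q' s a = r' s a + γ * ∑ s', p' s a s' * V' s')
    (hV' : ∀ s, V' s = Q' s (π s)) :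
    (univ.sup' univ_nonempty fun s => |V s - V' s|) ≤
        (univ.sup' univ_nonempty fun sa : S × A => |Q sa.1 sa.2 - Q' sa.1 sa.2|) ∧
      (univ.sup' univ_nonempty fun sa : S × A => |Q sa.1 sa.2 - Q' sa.1 sa.2|) ≤
        (1 / (1 - γ)) *
          (univ.sup' univ_nonempty fun sa : S × A =>
            |φ sa.1 sa.2 ⬝ᵥ fun i =>
              θ i - θ' i + γ * ∑ s', (μ s' i - μ' s' i) * V s'|) := by
  obtain ⟨hγ0, hγ1⟩ := hγ
  set D := univ.sup' univ_nonempty fun sa : S × A => |Q sa.1 sa.2 - Q' sa.1 sa.2| with hD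
  set E := univ.sup' univ_nonempty fun sa : S × A =>
    |φ sa.1 sa.2 ⬝ᵥ fun i => θ i - θ' i + γ * ∑ s', (μ s' i - μ' s' i) * V s'| with hE
  have hVD : ∀ s, |V s - V' s| ≤ D := fun s => by
    rw [hV, hV']
    exact le_sup' (fun sa : S × A => |Q sa.1 sa.2 - Q' sa.1 sa.2|) (mem_univ (s, π s))
  refine ⟨sup'_le _ _ fun s _ => hVD s, ?_⟩
  have hDE : D ≤ E + γ * D := by
    refine sup'_le _ _ ?_
    rintro ⟨s, a⟩ -
    have hsplit : Q s a - Q' s a =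
        (φ s a ⬝ᵥ fun i => θ i - θ' i + γ * ∑ s', (μ s' i - μ' s' i) * V s') +
          γ * ∑ s', p' s a s' * (V s' - V' s') := by
      rw [dotProduct_param_error, hQ, hQ']
      simp only [← hr, ← hr', ← hP, ← hP', sub_mul, mul_sub, sum_sub_distrib]
      ring
    have hE' : |φ s a ⬝ᵥ fun i => θ i - θ' i + γ * ∑ s', (μ s' i - μ' s' i) * V s'| ≤ E :=
      le_sup' (fun sa : S × A =>
        |φ sa.1 sa.2 ⬝ᵥ fun i => θ i - θ' i + γ * ∑ s', (μ s' i - μ' s' i) * V s'|)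
        (mem_univ (s, a))
    have hsum : |∑ s', p' s a s' * (V s' - V' s')| ≤ D :=
      calc |∑ s', p' s a s' * (V s' - V' s')|
          ≤ ∑ s', |p' s a s' * (V s' - V' s')| := abs_sum_le_sum_abs _ _
        _ ≤ ∑ s', p' s a s' * D := by
            refine sum_le_sum fun s' _ => ?_
            rw [abs_mul, abs_of_nonneg (hp0' s a s')]
            exact mul_le_mul_of_nonneg_left (hVD s') (hp0' s a s')
        _ = D := by rw [← sum_mul, hp1', one_mul]
    change |Q s a - Q' s a| ≤ _
    rw [hsplit]
    refine (abs_add_le _ _).trans (add_le_add hE' ?_)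
    rw [abs_mul, abs_of_pos hγ0]
    exact mul_le_mul_of_nonneg_left hsum hγ0.le
  rw [one_div, inv_mul_eq_div, le_div_iff₀ (by linarith)]
  linarith
end

section
/- Let M and M' be discounted MDPs on (S, A) with common discount γ ∈ (0,1), let ε > 0, suppose M has a unique optimal policy π*_M (for every s, Q*_M(s,·) has a unique maximizer), and suppose π*_M is not ε-optimal for M'. Then Δ(M) + ε ≤ ‖V*_M − V^{π*_M}_{M'}‖_∞ + ‖Q*_M − Q*_{M'}‖_∞. -/
/-! Take a state `s₀` maximizing the loss `V'* - V'^π` of `π = π*_M` in `M'`; this maximum exceeds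
`ε` because `π` is not `ε`-optimal. Let `a` be optimal for `M'` at `s₀`. If `a = π s₀`, the two
Bellman equations express the loss at `s₀` as `γ` times an average of losses, so the maximal loss is
at most `γ` times itself, contradicting its positivity. Hence `a ≠ π s₀`, and
`Δ(M) + ε ≤ (V* - Q*(·, a)) + (V'* - V'^π) = (V* - V'^π) + (Q'*(·, a) - Q*(·, a))` at `s₀`, where
`V'* s₀ = Q'* s₀ a` was used. -/

open Matrix Finset

theorem stmt_10 {S A : Type*} [Fintype S] [Fintype A] [Nonempty S] [Nonempty A]
    [DecidableEq A]
    (γ : ℝ) (hγ : γ ∈ Set.Ioo (0 : ℝ) 1) (ε : ℝ) (hε : 0 < ε)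
    (p p' : S → A → S → ℝ) (r r' : S → A → ℝ)
    (hp0 : ∀ s a s', 0 ≤ p s a s') (hp1 : ∀ s a, ∑ s', p s a s' = 1)
    (hp0' : ∀ s a s', 0 ≤ p' s a s') (hp1' : ∀ s a, ∑ s', p' s a s' = 1)
    -- optimal value functions of M
    (Vstar : S → ℝ) (Qstar : S → A → ℝ)
    (hQstar : ∀ s a, Qstar s a = r s a + γ * ∑ s', p s a s' * Vstar s')
    (hVstar : ∀ s, Vstar s = univ.sup' univ_nonempty fun a => Qstar s a)
    -- optimal value functions of M'
    (V'star : S → ℝ) (Q'star : S → A → ℝ)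
    (hQ'star : ∀ s a, Q'star s a = r' s a + γ * ∑ s', p' s a s' * V'star s')
    (hV'star : ∀ s, V'star s = univ.sup' univ_nonempty fun a => Q'star s a)
    -- unique optimal policy of M
    (πstar : S → A)
    (hπ : ∀ s a, a ≠ πstar s → Qstar s a < Qstar s (πstar s))
    -- value functions of πstar in M'
    (Vpi' : S → ℝ) (Qpi' : S → A → ℝ)
    (hQpi' : ∀ s a, Qpi' s a = r' s a + γ * ∑ s', p' s a s' * Vpi' s')
    (hVpi' : ∀ s, Vpi' s = Qpi' s (πstar s))
    -- πstar is not ε-optimal for M'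
    (hnotopt : ¬ ∀ s, V'star s - ε ≤ Vpi' s)
    -- the suboptimality gap of M
    (T : Finset (S × A)) (hTdef : T = univ.filter fun sa : S × A => sa.2 ≠ πstar sa.1)
    (hT : T.Nonempty) :
    T.inf' hT (fun sa => Vstar sa.1 - Qstar sa.1 sa.2) + ε ≤
      (univ.sup' univ_nonempty fun s => |Vstar s - Vpi' s|) +
        (univ.sup' univ_nonempty fun sa : S × A =>
          |Qstar sa.1 sa.2 - Q'star sa.1 sa.2|) := by
  obtain ⟨hγ0, hγ1⟩ := hγ
  push Not at hnotopt
  obtain ⟨s₁, hs₁⟩ := hnotopt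
  obtain ⟨s₀, -, hmax⟩ := exists_max_image univ (fun s => V'star s - Vpi' s) univ_nonempty
  have hloss : ε < V'star s₀ - Vpi' s₀ := by
    have := hmax s₁ (mem_univ _)
    linarith
  obtain ⟨a, -, ha⟩ := exists_mem_eq_sup' (univ_nonempty (α := A)) (fun a => Q'star s₀ a)
  rw [← hV'star] at ha
  have hne : a ≠ πstar s₀ := by
    intro h
    have hle : ∑ s', p' s₀ a s' * (V'star s' - Vpi' s') ≤ V'star s₀ - Vpi' s₀ := by
      calc ∑ s', p' s₀ a s' * (V'star s' - Vpi' s')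
          ≤ ∑ s', p' s₀ a s' * (V'star s₀ - Vpi' s₀) :=
            sum_le_sum fun s' _ =>
              mul_le_mul_of_nonneg_left (hmax s' (mem_univ _)) (hp0' s₀ a s')
        _ = V'star s₀ - Vpi' s₀ := by rw [← sum_mul, hp1', one_mul]
    have heq : V'star s₀ - Vpi' s₀ = γ * ∑ s', p' s₀ a s' * (V'star s' - Vpi' s') := by
      simp only [mul_sub, sum_sub_distrib]
      rw [hVpi' s₀, ← h, hQpi', ha, hQ'star]
      ring
    nlinarith
  have hgap : T.inf' hT (fun sa => Vstar sa.1 - Qstar sa.1 sa.2) ≤ Vstar s₀ - Qstar s₀ a :=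
    inf'_le (fun sa : S × A => Vstar sa.1 - Qstar sa.1 sa.2) (b := (s₀, a))
      (by simp [hTdef, hne])
  have hV : |Vstar s₀ - Vpi' s₀| ≤ univ.sup' univ_nonempty fun s => |Vstar s - Vpi' s| :=
    le_sup' (fun s => |Vstar s - Vpi' s|) (mem_univ s₀)
  have hQ : |Qstar s₀ a - Q'star s₀ a| ≤ univ.sup' univ_nonempty fun sa : S × A =>
      |Qstar sa.1 sa.2 - Q'star sa.1 sa.2| :=
    le_sup' (fun sa : S × A => |Qstar sa.1 sa.2 - Q'star sa.1 sa.2|) (mem_univ (s₀, a))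
  linarith [le_abs_self (Vstar s₀ - Vpi' s₀), neg_abs_le (Qstar s₀ a - Q'star s₀ a)]
end

section
/- Let M and M' be episodic MDPs on (S, A) with common horizon H, let ε > 0, suppose M has a unique optimal policy π*_M = (π*_{M,h})_h (for every h and s, Q*_{M,h}(s,·) has a unique maximizer), and suppose π*_M is not ε-optimal for M'. Then there exists h ∈ {1,…,H} such that Δ(M) + ε ≤ ‖V*_{M,h} − V^{π*_M}_{M',h}‖_∞ + ‖Q*_{M,h} − Q*_{M',h}‖_∞. -/
/-!
Write `Δ` for the gap of `M` and suppose that the inequality fails at every step `h`. Backward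
induction then shows that `π*_M` is `ε`-optimal for `M'` from every state at every step. Indeed, let
`a` maximize `Q*_{M',h}(s,·)`.

* If `a = π*_{M,h}(s)`, both values follow the same action, so the loss at `(h, s)` is an average
  of the losses at step `h + 1` and hence at most `ε`.
* Otherwise `Δ ≤ V*_{M,h}(s) - Q*_{M,h}(s,a)`, which equals
  `(V*_{M,h} - V^π_{M',h})(s) - (V*_{M',h} - V^π_{M',h})(s) + (Q*_{M',h} - Q*_{M,h})(s,a)`.
  A loss exceeding `ε` would give the inequality at `h`.
-/

open Matrix Finset

theorem stmt_11 {S A : Type*} [Fintype S] [Fintype A] [Nonempty S] [Nonempty A]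
    [DecidableEq A]
    (H : ℕ) (hH : 1 ≤ H) (ε : ℝ) (hε : 0 < ε)
    (p p' : ℕ → S → A → S → ℝ) (r r' : ℕ → S → A → ℝ)
    (hp0 : ∀ h ∈ Finset.Icc 1 H, ∀ s a s', 0 ≤ p h s a s')
    (hp1 : ∀ h ∈ Finset.Icc 1 H, ∀ s a, ∑ s', p h s a s' = 1)
    (hp0' : ∀ h ∈ Finset.Icc 1 H, ∀ s a s', 0 ≤ p' h s a s')
    (hp1' : ∀ h ∈ Finset.Icc 1 H, ∀ s a, ∑ s', p' h s a s' = 1)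
    -- optimal value functions of M
    (Vstar : ℕ → S → ℝ) (Qstar : ℕ → S → A → ℝ)
    (hVstarTop : ∀ s, Vstar (H + 1) s = 0)
    (hQstar : ∀ h ∈ Finset.Icc 1 H, ∀ s a,
      Qstar h s a = r h s a + ∑ s', p h s a s' * Vstar (h + 1) s')
    (hVstar : ∀ h ∈ Finset.Icc 1 H, ∀ s,
      Vstar h s = univ.sup' univ_nonempty fun a => Qstar h s a)
    -- optimal value functions of M'
    (V'star : ℕ → S → ℝ) (Q'star : ℕ → S → A → ℝ)
    (hV'starTop : ∀ s, V'star (H + 1) s = 0)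
    (hQ'star : ∀ h ∈ Finset.Icc 1 H, ∀ s a,
      Q'star h s a = r' h s a + ∑ s', p' h s a s' * V'star (h + 1) s')
    (hV'star : ∀ h ∈ Finset.Icc 1 H, ∀ s,
      V'star h s = univ.sup' univ_nonempty fun a => Q'star h s a)
    -- unique optimal policy of M
    (πstar : ℕ → S → A)
    (hπ : ∀ h ∈ Finset.Icc 1 H, ∀ s a, a ≠ πstar h s →
      Qstar h s a < Qstar h s (πstar h s))
    -- value functions of πstar in M'
    (Vpi' : ℕ → S → ℝ) (Qpi' : ℕ → S → A → ℝ)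
    (hVpi'Top : ∀ s, Vpi' (H + 1) s = 0)
    (hQpi' : ∀ h ∈ Finset.Icc 1 H, ∀ s a,
      Qpi' h s a = r' h s a + ∑ s', p' h s a s' * Vpi' (h + 1) s')
    (hVpi' : ∀ h ∈ Finset.Icc 1 H, ∀ s, Vpi' h s = Qpi' h s (πstar h s))
    -- πstar is not ε-optimal for M'
    (hnotopt : ¬ ∀ s, V'star 1 s - ε ≤ Vpi' 1 s)
    -- the gap of M
    (T : Finset (ℕ × S × A))
    (hTdef : T = (Finset.Icc 1 H ×ˢ (univ : Finset (S × A))).filter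
      fun x : ℕ × S × A => x.2.2 ≠ πstar x.1 x.2.1)
    (hT : T.Nonempty) :
    ∃ h ∈ Finset.Icc 1 H,
      T.inf' hT (fun x => Vstar x.1 x.2.1 - Qstar x.1 x.2.1 x.2.2) + ε ≤
        (univ.sup' univ_nonempty fun s => |Vstar h s - Vpi' h s|) +
          (univ.sup' univ_nonempty fun sa : S × A =>
            |Qstar h sa.1 sa.2 - Q'star h sa.1 sa.2|) := by
  by_contra hcon
  push Not at hcon
  have key : ∀ k ≤ H, ∀ s, V'star (H + 1 - k) s - ε ≤ Vpi' (H + 1 - k) s := by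
    intro k
    induction k with
    | zero =>
      intro _ s
      simp only [Nat.sub_zero, hV'starTop, hVpi'Top]
      linarith
    | succ k ih =>
      intro hk s
      have ih := ih (by omega)
      obtain ⟨h, hh⟩ : ∃ h, h = H + 1 - (k + 1) := ⟨_, rfl⟩
      have hsucc : H + 1 - k = h + 1 := by omega
      rw [← hh]
      rw [hsucc] at ih
      have hm : h ∈ Finset.Icc 1 H := Finset.mem_Icc.2 (by omega)
      obtain ⟨a, -, ha⟩ := Finset.exists_mem_eq_sup' (univ_nonempty (α := A))
        (fun a => Q'star h s a)
      have hVa : V'star h s = Q'star h s a := (hV'star h hm s).trans ha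
      by_cases hap : a = πstar h s
      · rw [hVa, hVpi' h hm s, ← hap, hQ'star h hm, hQpi' h hm]
        have h1 : ∑ s', p' h s a s' * (V'star (h + 1) s' - ε) ≤
            ∑ s', p' h s a s' * Vpi' (h + 1) s' :=
          Finset.sum_le_sum fun s' _ => mul_le_mul_of_nonneg_left (ih s') (hp0' h hm s a s')
        simp only [mul_sub, Finset.sum_sub_distrib, ← Finset.sum_mul, hp1' h hm s a] at h1
        linarith
      · have hmem : (h, s, a) ∈ T := by
          rw [hTdef]
          exact Finset.mem_filter.2 ⟨Finset.mem_product.2 ⟨hm, Finset.mem_univ _⟩, hap⟩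
        have h1 := Finset.inf'_le
          (fun x : ℕ × S × A => Vstar x.1 x.2.1 - Qstar x.1 x.2.1 x.2.2) hmem
        have h2 := Finset.le_sup' (fun s => |Vstar h s - Vpi' h s|) (Finset.mem_univ s)
        have h3 := Finset.le_sup'
          (fun sa : S × A => |Qstar h sa.1 sa.2 - Q'star h sa.1 sa.2|) (Finset.mem_univ (s, a))
        have h4 := hcon h hm
        have h5 := le_abs_self (Vstar h s - Vpi' h s)
        have h6 := neg_abs_le (Qstar h s a - Q'star h s a)
        dsimp only at h1 h2 h3
        linarith
  -- Taking `k = H` reaches the first step.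
  apply hnotopt
  simpa using key H le_rfl
end

section
/- Let M and M̂ be two linear discounted MDPs on (S, A) with common feature map φ : S×A → ℝ^d and common discount γ ∈ (0,1), with parameters (θ_M, μ_M) and (θ̂, μ̂) respectively, and suppose each of M and M̂ has a unique optimal policy (for every s, both Q*_M(s,·) and Q*_{M̂}(s,·) have unique maximizers). Then |Δ(M̂) − Δ(M)| ≤ (2/(1−γ))·max_{(s,a)∈S×A} |φ(s,a)ᵀ(θ̂ − θ_M + γ·Σ_{s'∈S} (μ̂(s') − μ_M(s'))·V*_{M̂}(s'))|. -/
/-!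
Let `ε` be the maximum on the right-hand side and `D = max |Qhat - Qstar|`. By linearity, subtracting
the two Bellman equations gives `Qhat - Qstar = x + γ P (Vhat - Vstar)`, where `|x| ≤ ε` is the
Bellman residual of `Vhat` under the other model and `P` is the transition operator of `M`. Since
`P` averages and the maximum over actions is 1-Lipschitz, `D ≤ ε + γ D`, that is
`D ≤ ε / (1 - γ)`.

The gap at a state is the largest minus the second largest value of `Q(s, ·)`, so the minimal gap
moves by at most `2 D`. `gap_le_gap_add` is the one-sided form of this; its only delicate case is
when the pair realizing the gap of one MDP is optimal in the other one, where the action optimal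
in the first MDP serves as the competitor.
-/

open Matrix Finset

/-- The maximum over actions is 1-Lipschitz (one-sided form). -/
lemma sup_action_le_add {A : Type*} [Fintype A] [Nonempty A] (q q' : A → ℝ) (D : ℝ)
    (h : ∀ a, |q' a - q a| ≤ D) :
    univ.sup' univ_nonempty q' ≤ univ.sup' univ_nonempty q + D := by
  refine Finset.sup'_le _ _ fun a _ => ?_
  have h1 := Finset.le_sup' q (Finset.mem_univ a)
  have h2 := (abs_le.mp (h a)).2
  linarith

/-- If two action-value functions are uniformly `D`-close, the minimal gap of the second exceeds
that of the first by at most `2 D`. -/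
lemma gap_le_gap_add {S A : Type*} [Fintype S] [Fintype A] [Nonempty A] [DecidableEq A]
    (V V' : S → ℝ) (Q Q' : S → A → ℝ) (D : ℝ)
    (hV : ∀ s, V s = univ.sup' univ_nonempty fun a => Q s a)
    (hV' : ∀ s, V' s = univ.sup' univ_nonempty fun a => Q' s a)
    (hD : ∀ s a, |Q' s a - Q s a| ≤ D)
    (π π' : S → A)
    (hπ : ∀ s a, a ≠ π s → Q s a < Q s (π s))
    (hπ' : ∀ s a, a ≠ π' s → Q' s a < Q' s (π' s))
    (T T' : Finset (S × A))
    (hTdef : T = univ.filter fun sa : S × A => sa.2 ≠ π sa.1)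
    (hTdef' : T' = univ.filter fun sa : S × A => sa.2 ≠ π' sa.1)
    (hT : T.Nonempty) (hT' : T'.Nonempty) :
    T'.inf' hT' (fun sa => V' sa.1 - Q' sa.1 sa.2) ≤
      T.inf' hT (fun sa => V sa.1 - Q sa.1 sa.2) + 2 * D := by
  obtain ⟨⟨s, a⟩, hmem, heq⟩ := Finset.exists_mem_eq_inf' hT fun sa => V sa.1 - Q sa.1 sa.2
  rw [heq]
  have ha : a ≠ π s := by simpa [hTdef] using hmem
  have hle : ∀ b, b ≠ π' s →
      T'.inf' hT' (fun sa => V' sa.1 - Q' sa.1 sa.2) ≤ V' s - Q' s b := fun b hb =>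
    Finset.inf'_le (fun sa : S × A => V' sa.1 - Q' sa.1 sa.2)
      (show (s, b) ∈ T' by simpa [hTdef'] using hb)
  have hVa : Q s a ≤ V s := by
    rw [hV]; exact Finset.le_sup' (fun a => Q s a) (Finset.mem_univ a)
  have hDa := abs_le.mp (hD s a)
  -- If `a` is optimal for the second MDP, then `π s` is suboptimal there, by at most `2 D`.
  by_cases hc : a = π' s
  · have h1 := hle (π s) fun h => ha (hc.trans h.symm)
    have h2 : V' s ≤ Q' s a := by
      rw [hV']
      refine Finset.sup'_le _ _ fun b _ => ?_
      by_cases hb : b = π' s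
      · rw [hb, hc]
      · rw [hc]; exact (hπ' s b hb).le
    have h3 := abs_le.mp (hD s (π s))
    have h4 := hπ s a ha
    simp only
    linarith [hDa.2, h3.1]
  · have h1 := hle a hc
    have h2 : V' s ≤ V s + D := by
      rw [hV, hV']; exact sup_action_le_add _ _ D (hD s)
    simp only
    linarith [hDa.1]

theorem stmt_12 {S A : Type*} [Fintype S] [Fintype A] [Nonempty S] [Nonempty A]
    [DecidableEq A]
    {d : ℕ} (φ : S → A → Fin d → ℝ) (γ : ℝ) (hγ : γ ∈ Set.Ioo (0 : ℝ) 1)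
    (p phat : S → A → S → ℝ) (r rhat : S → A → ℝ)
    (hp0 : ∀ s a s', 0 ≤ p s a s') (hp1 : ∀ s a, ∑ s', p s a s' = 1)
    (hp0hat : ∀ s a s', 0 ≤ phat s a s') (hp1hat : ∀ s a, ∑ s', phat s a s' = 1)
    (θ θhat : Fin d → ℝ) (μ μhat : S → Fin d → ℝ)
    (hr : ∀ s a, r s a = φ s a ⬝ᵥ θ) (hP : ∀ s a s', p s a s' = φ s a ⬝ᵥ μ s')
    (hrhat : ∀ s a, rhat s a = φ s a ⬝ᵥ θhat)
    (hPhat : ∀ s a s', phat s a s' = φ s a ⬝ᵥ μhat s')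
    -- optimal value functions of M
    (Vstar : S → ℝ) (Qstar : S → A → ℝ)
    (hQstar : ∀ s a, Qstar s a = r s a + γ * ∑ s', p s a s' * Vstar s')
    (hVstar : ∀ s, Vstar s = univ.sup' univ_nonempty fun a => Qstar s a)
    -- optimal value functions of M̂
    (Vhat : S → ℝ) (Qhat : S → A → ℝ)
    (hQhat : ∀ s a, Qhat s a = rhat s a + γ * ∑ s', phat s a s' * Vhat s')
    (hVhat : ∀ s, Vhat s = univ.sup' univ_nonempty fun a => Qhat s a)
    -- unique optimal policies
    (πstar πhat : S → A)
    (hπ : ∀ s a, a ≠ πstar s → Qstar s a < Qstar s (πstar s))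
    (hπhat : ∀ s a, a ≠ πhat s → Qhat s a < Qhat s (πhat s))
    -- the suboptimality gaps
    (T That : Finset (S × A))
    (hTdef : T = univ.filter fun sa : S × A => sa.2 ≠ πstar sa.1)
    (hThatdef : That = univ.filter fun sa : S × A => sa.2 ≠ πhat sa.1)
    (hT : T.Nonempty) (hThat : That.Nonempty) :
    |That.inf' hThat (fun sa => Vhat sa.1 - Qhat sa.1 sa.2) -
        T.inf' hT (fun sa => Vstar sa.1 - Qstar sa.1 sa.2)| ≤
      (2 / (1 - γ)) *
        (univ.sup' univ_nonempty fun sa : S × A =>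
          |φ sa.1 sa.2 ⬝ᵥ fun i =>
            θhat i - θ i + γ * ∑ s', (μhat s' i - μ s' i) * Vhat s'|) := by
  obtain ⟨hγ0, hγ1⟩ := hγ
  set ε := univ.sup' univ_nonempty fun sa : S × A =>
    |φ sa.1 sa.2 ⬝ᵥ fun i =>
      θhat i - θ i + γ * ∑ s', (μhat s' i - μ s' i) * Vhat s'| with hε
  have hεle : ∀ s a, |φ s a ⬝ᵥ fun i =>
      θhat i - θ i + γ * ∑ s', (μhat s' i - μ s' i) * Vhat s'| ≤ ε := fun s a =>
    Finset.le_sup' (fun sa : S × A => |φ sa.1 sa.2 ⬝ᵥ fun i =>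
      θhat i - θ i + γ * ∑ s', (μhat s' i - μ s' i) * Vhat s'|) (Finset.mem_univ (s, a))
  have hlin : ∀ s a, (φ s a ⬝ᵥ fun i =>
      θhat i - θ i + γ * ∑ s', (μhat s' i - μ s' i) * Vhat s') =
      rhat s a - r s a + γ * ∑ s', (phat s a s' - p s a s') * Vhat s' := by
    intro s a
    have hvec : (fun i => θhat i - θ i + γ * ∑ s', (μhat s' i - μ s' i) * Vhat s') =
        θhat - θ + γ • ∑ s', Vhat s' • (μhat s' - μ s') := by
      ext i
      simp [Finset.sum_apply, mul_comm]
    rw [hvec, dotProduct_add, dotProduct_sub, dotProduct_smul, dotProduct_sum, hr, hrhat]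
    simp [hP, hPhat, dotProduct_smul, dotProduct_sub, mul_comm]
  have hdiff : ∀ s a, Qhat s a - Qstar s a = (φ s a ⬝ᵥ fun i =>
      θhat i - θ i + γ * ∑ s', (μhat s' i - μ s' i) * Vhat s') +
      γ * ∑ s', p s a s' * (Vhat s' - Vstar s') := by
    intro s a
    rw [hlin, hQhat, hQstar]
    simp only [sub_mul, mul_sub, Finset.sum_sub_distrib]
    ring
  obtain ⟨D, hD, ⟨s₀, a₀⟩, hDeq⟩ : ∃ D, (∀ s a, |Qhat s a - Qstar s a| ≤ D) ∧
      ∃ sa : S × A, D = |Qhat sa.1 sa.2 - Qstar sa.1 sa.2| := by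
    obtain ⟨sa, -, h⟩ := Finset.exists_max_image (univ : Finset (S × A))
      (fun sa => |Qhat sa.1 sa.2 - Qstar sa.1 sa.2|) univ_nonempty
    exact ⟨_, fun s a => h (s, a) (Finset.mem_univ _), sa, rfl⟩
  have hD' : ∀ s a, |Qstar s a - Qhat s a| ≤ D := fun s a => by
    rw [abs_sub_comm]; exact hD s a
  have hVD : ∀ s, |Vhat s - Vstar s| ≤ D := by
    intro s
    have h1 := sup_action_le_add _ _ D (hD s)
    have h2 := sup_action_le_add _ _ D (hD' s)
    rw [hVhat, hVstar, abs_le]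
    constructor <;> linarith
  have hPD : |∑ s', p s₀ a₀ s' * (Vhat s' - Vstar s')| ≤ D := by
    calc |∑ s', p s₀ a₀ s' * (Vhat s' - Vstar s')|
        ≤ ∑ s', |p s₀ a₀ s' * (Vhat s' - Vstar s')| := Finset.abs_sum_le_sum_abs _ _
      _ ≤ ∑ s', p s₀ a₀ s' * D := by
          refine Finset.sum_le_sum fun s' _ => ?_
          rw [abs_mul, abs_of_nonneg (hp0 _ _ _)]
          exact mul_le_mul_of_nonneg_left (hVD s') (hp0 _ _ _)
      _ = D := by rw [← Finset.sum_mul, hp1, one_mul]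
  have hcontr : D ≤ ε + γ * D := by
    calc D = |Qhat s₀ a₀ - Qstar s₀ a₀| := hDeq
      _ ≤ _ + |γ * ∑ s', p s₀ a₀ s' * (Vhat s' - Vstar s')| := by
          rw [hdiff]; exact abs_add_le _ _
      _ ≤ ε + γ * D := by
          rw [abs_mul, abs_of_pos hγ0]
          exact add_le_add (hεle s₀ a₀) (mul_le_mul_of_nonneg_left hPD hγ0.le)
  have hDε : 2 * D ≤ 2 / (1 - γ) * ε := by
    rw [div_mul_eq_mul_div, le_div_iff₀ (by linarith)]
    linarith
  have h1 := gap_le_gap_add Vstar Vhat Qstar Qhat D hVstar hVhat hD πstar πhat hπ hπhat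
    T That hTdef hThatdef hT hThat
  have h2 := gap_le_gap_add Vhat Vstar Qhat Qstar D hVhat hVstar hD' πhat πstar hπhat hπ
    That T hThatdef hTdef hThat hT
  rw [abs_le]
  constructor <;> linarith
end

section
/- Let M and M̂ be two linear episodic MDPs on (S, A) with common horizon H and common feature map φ : S×A → ℝ^d, with parameters (θ_{M,h}, μ_{M,h})_h and (θ̂_h, μ̂_h)_h respectively, and suppose each of M and M̂ has a unique optimal policy (for every h and s, both Q*_{M,h}(s,·) and Q*_{M̂,h}(s,·) have unique maximizers). Then |Δ(M̂) − Δ(M)| ≤ 2·Σ_{h=1}^H max_{(s,a)∈S×A} |φ(s,a)ᵀ(θ̂_h − θ_{M,h} + Σ_{s'∈S} (μ̂_h(s') − μ_{M,h}(s'))·V*_{M̂,h+1}(s'))|. -/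
/-!
The two gaps are compared through the optimal `Q`-functions. By linearity,
`Q̂_h - Q_h = ε_h + Σ_{s'} p_h(·, s') (V̂_{h+1} - V_{h+1})(s')`, where `ε_h(s, a)` is the inner product
appearing in the bound. Since `p_h` is a probability vector and `max` is 1-Lipschitz for the sup norm,
backward induction gives `|Q̂_h - Q_h| ≤ E` and `|V̂_h - V_h| ≤ E`, with `E = Σ_h max |ε_h|`.

It remains to see that the gap is 2-Lipschitz in `Q` (`gap_le_gap_add`, applied in both directions).
Let `(h, s, a)` attain the gap of one MDP. If `a` is suboptimal at `(h, s)` in the other MDP too,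
compare there directly. Otherwise `a` is optimal in the other MDP, hence the action `a'` optimal in
the first MDP is suboptimal in the other, and its suboptimality there is
`Q₂(a) - Q₂(a') ≤ Q₁(a) - Q₁(a') + 2E ≤ 2E`.
-/

open Matrix Finset

/-- The maximum over a finite type is 1-Lipschitz for the sup norm. -/
lemma abs_sup'_sub_sup'_le {ι : Type*} [Fintype ι] [Nonempty ι] (f g : ι → ℝ) (c : ℝ)
    (hfg : ∀ i, |f i - g i| ≤ c) :
    |univ.sup' univ_nonempty f - univ.sup' univ_nonempty g| ≤ c := by
  have key : ∀ f g : ι → ℝ, (∀ i, |f i - g i| ≤ c) →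
      univ.sup' univ_nonempty f ≤ univ.sup' univ_nonempty g + c := by
    intro f g hfg
    refine Finset.sup'_le _ _ fun i hi => ?_
    have h1 := Finset.le_sup' g hi
    have h2 := (abs_le.1 (hfg i)).2
    linarith
  have h1 := key f g hfg
  have h2 := key g f fun i => by rw [abs_sub_comm]; exact hfg i
  rw [abs_le]
  constructor <;> linarith

/-- One direction of the 2-Lipschitz dependence of the gap on the optimal `Q`-function. -/
lemma gap_le_gap_add_s13 {S A : Type*} [Fintype S] [Fintype A] [Nonempty A] [DecidableEq A] (H : ℕ)
    (V₁ V₂ : ℕ → S → ℝ) (Q₁ Q₂ : ℕ → S → A → ℝ) (π₁ π₂ : ℕ → S → A) (E : ℝ)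
    (hV₁ : ∀ h ∈ Finset.Icc 1 H, ∀ s, V₁ h s = univ.sup' univ_nonempty fun a => Q₁ h s a)
    (hV₂ : ∀ h ∈ Finset.Icc 1 H, ∀ s, V₂ h s = univ.sup' univ_nonempty fun a => Q₂ h s a)
    (hπ₁ : ∀ h ∈ Finset.Icc 1 H, ∀ s a, a ≠ π₁ h s → Q₁ h s a < Q₁ h s (π₁ h s))
    (hπ₂ : ∀ h ∈ Finset.Icc 1 H, ∀ s a, a ≠ π₂ h s → Q₂ h s a < Q₂ h s (π₂ h s))
    (hQ : ∀ h ∈ Finset.Icc 1 H, ∀ s a, |Q₂ h s a - Q₁ h s a| ≤ E)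
    (T₁ T₂ : Finset (ℕ × S × A))
    (hT₁def : T₁ = (Finset.Icc 1 H ×ˢ (univ : Finset (S × A))).filter
      fun x : ℕ × S × A => x.2.2 ≠ π₁ x.1 x.2.1)
    (hT₂def : T₂ = (Finset.Icc 1 H ×ˢ (univ : Finset (S × A))).filter
      fun x : ℕ × S × A => x.2.2 ≠ π₂ x.1 x.2.1)
    (hT₁ : T₁.Nonempty) (hT₂ : T₂.Nonempty) :
    T₂.inf' hT₂ (fun x => V₂ x.1 x.2.1 - Q₂ x.1 x.2.1 x.2.2) ≤
      T₁.inf' hT₁ (fun x => V₁ x.1 x.2.1 - Q₁ x.1 x.2.1 x.2.2) + 2 * E := by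
  obtain ⟨⟨h, s, a⟩, hx, hxe⟩ := Finset.exists_mem_eq_inf' hT₁
    (fun x => V₁ x.1 x.2.1 - Q₁ x.1 x.2.1 x.2.2)
  rw [hxe]
  rw [hT₁def] at hx
  simp only [Finset.mem_filter, Finset.mem_product, Finset.mem_univ, and_true] at hx
  obtain ⟨hh, ha⟩ := hx
  have hQa := abs_le.1 (hQ h hh s a)
  by_cases hc : a = π₂ h s
  · have hmem : (h, s, π₁ h s) ∈ T₂ := by
      rw [hT₂def]
      simp only [Finset.mem_filter, Finset.mem_product, Finset.mem_univ, and_true]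
      exact ⟨hh, fun he => ha (hc.trans he.symm)⟩
    have hle := Finset.inf'_le (fun x : ℕ × S × A => V₂ x.1 x.2.1 - Q₂ x.1 x.2.1 x.2.2) hmem
    have hV₂a : V₂ h s ≤ Q₂ h s a := by
      rw [hV₂ h hh s]
      refine Finset.sup'_le _ _ fun b _ => ?_
      by_cases hb : b = π₂ h s
      · rw [hb, hc]
      · rw [hc]; exact (hπ₂ h hh s b hb).le
    have hlt := hπ₁ h hh s a ha
    have hQp := abs_le.1 (hQ h hh s (π₁ h s))
    have hV₁a : Q₁ h s a ≤ V₁ h s := by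
      rw [hV₁ h hh s]; exact Finset.le_sup' (fun a => Q₁ h s a) (Finset.mem_univ a)
    simp only at hle ⊢
    linarith [hQp.1, hQa.2]
  · have hmem : (h, s, a) ∈ T₂ := by
      rw [hT₂def]
      simp only [Finset.mem_filter, Finset.mem_product, Finset.mem_univ, and_true]
      exact ⟨hh, hc⟩
    have hle := Finset.inf'_le (fun x : ℕ × S × A => V₂ x.1 x.2.1 - Q₂ x.1 x.2.1 x.2.2) hmem
    have hV : |V₂ h s - V₁ h s| ≤ E := by
      rw [hV₁ h hh s, hV₂ h hh s]
      exact abs_sup'_sub_sup'_le _ _ _ (hQ h hh s)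
    simp only at hle ⊢
    linarith [(abs_le.1 hV).2, hQa.1]

theorem stmt_13 {S A : Type*} [Fintype S] [Fintype A] [Nonempty S] [Nonempty A]
    [DecidableEq A]
    {d : ℕ} (φ : S → A → Fin d → ℝ) (H : ℕ) (hH : 1 ≤ H)
    (p phat : ℕ → S → A → S → ℝ) (r rhat : ℕ → S → A → ℝ)
    (hp0 : ∀ h ∈ Finset.Icc 1 H, ∀ s a s', 0 ≤ p h s a s')
    (hp1 : ∀ h ∈ Finset.Icc 1 H, ∀ s a, ∑ s', p h s a s' = 1)
    (hp0hat : ∀ h ∈ Finset.Icc 1 H, ∀ s a s', 0 ≤ phat h s a s')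
    (hp1hat : ∀ h ∈ Finset.Icc 1 H, ∀ s a, ∑ s', phat h s a s' = 1)
    (θ θhat : ℕ → Fin d → ℝ) (μ μhat : ℕ → S → Fin d → ℝ)
    (hr : ∀ h ∈ Finset.Icc 1 H, ∀ s a, r h s a = φ s a ⬝ᵥ θ h)
    (hP : ∀ h ∈ Finset.Icc 1 H, ∀ s a s', p h s a s' = φ s a ⬝ᵥ μ h s')
    (hrhat : ∀ h ∈ Finset.Icc 1 H, ∀ s a, rhat h s a = φ s a ⬝ᵥ θhat h)
    (hPhat : ∀ h ∈ Finset.Icc 1 H, ∀ s a s', phat h s a s' = φ s a ⬝ᵥ μhat h s')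
    -- optimal value functions of M
    (Vstar : ℕ → S → ℝ) (Qstar : ℕ → S → A → ℝ)
    (hVstarTop : ∀ s, Vstar (H + 1) s = 0)
    (hQstar : ∀ h ∈ Finset.Icc 1 H, ∀ s a,
      Qstar h s a = r h s a + ∑ s', p h s a s' * Vstar (h + 1) s')
    (hVstar : ∀ h ∈ Finset.Icc 1 H, ∀ s,
      Vstar h s = univ.sup' univ_nonempty fun a => Qstar h s a)
    -- optimal value functions of M̂
    (Vhat : ℕ → S → ℝ) (Qhat : ℕ → S → A → ℝ)
    (hVhatTop : ∀ s, Vhat (H + 1) s = 0)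
    (hQhat : ∀ h ∈ Finset.Icc 1 H, ∀ s a,
      Qhat h s a = rhat h s a + ∑ s', phat h s a s' * Vhat (h + 1) s')
    (hVhat : ∀ h ∈ Finset.Icc 1 H, ∀ s,
      Vhat h s = univ.sup' univ_nonempty fun a => Qhat h s a)
    -- unique optimal policies
    (πstar πhat : ℕ → S → A)
    (hπ : ∀ h ∈ Finset.Icc 1 H, ∀ s a, a ≠ πstar h s →
      Qstar h s a < Qstar h s (πstar h s))
    (hπhat : ∀ h ∈ Finset.Icc 1 H, ∀ s a, a ≠ πhat h s →
      Qhat h s a < Qhat h s (πhat h s))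
    -- the gaps
    (T That : Finset (ℕ × S × A))
    (hTdef : T = (Finset.Icc 1 H ×ˢ (univ : Finset (S × A))).filter
      fun x : ℕ × S × A => x.2.2 ≠ πstar x.1 x.2.1)
    (hThatdef : That = (Finset.Icc 1 H ×ˢ (univ : Finset (S × A))).filter
      fun x : ℕ × S × A => x.2.2 ≠ πhat x.1 x.2.1)
    (hT : T.Nonempty) (hThat : That.Nonempty) :
    |That.inf' hThat (fun x => Vhat x.1 x.2.1 - Qhat x.1 x.2.1 x.2.2) -
        T.inf' hT (fun x => Vstar x.1 x.2.1 - Qstar x.1 x.2.1 x.2.2)| ≤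
      2 * ∑ h ∈ Finset.Icc 1 H,
        (univ.sup' univ_nonempty fun sa : S × A =>
          |φ sa.1 sa.2 ⬝ᵥ fun i =>
            θhat h i - θ h i + ∑ s', (μhat h s' i - μ h s' i) * Vhat (h + 1) s'|) := by
  set e : ℕ → ℝ := fun h => univ.sup' univ_nonempty fun sa : S × A =>
    |φ sa.1 sa.2 ⬝ᵥ fun i =>
      θhat h i - θ h i + ∑ s', (μhat h s' i - μ h s' i) * Vhat (h + 1) s'| with he
  have he_le : ∀ h s a, |φ s a ⬝ᵥ fun i =>
      θhat h i - θ h i + ∑ s', (μhat h s' i - μ h s' i) * Vhat (h + 1) s'| ≤ e h := fun h s a =>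
    Finset.le_sup' (fun sa : S × A => |φ sa.1 sa.2 ⬝ᵥ fun i =>
      θhat h i - θ h i + ∑ s', (μhat h s' i - μ h s' i) * Vhat (h + 1) s'|)
      (Finset.mem_univ (s, a))
  have he0 : ∀ h, 0 ≤ e h := fun h =>
    (abs_nonneg _).trans (he_le h (Classical.arbitrary S) (Classical.arbitrary A))
  -- The inner product is the one-step Bellman error of `Vhat` between the two models.
  have hstep : ∀ h ∈ Finset.Icc 1 H, ∀ s a, Qhat h s a - Qstar h s a =
      (φ s a ⬝ᵥ fun i => θhat h i - θ h i + ∑ s', (μhat h s' i - μ h s' i) * Vhat (h + 1) s') +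
        ∑ s', p h s a s' * (Vhat (h + 1) s' - Vstar (h + 1) s') := by
    intro h hh s a
    have hlin : (φ s a ⬝ᵥ fun i =>
        θhat h i - θ h i + ∑ s', (μhat h s' i - μ h s' i) * Vhat (h + 1) s') =
        φ s a ⬝ᵥ θhat h - φ s a ⬝ᵥ θ h +
          ∑ s', (φ s a ⬝ᵥ μhat h s' - φ s a ⬝ᵥ μ h s') * Vhat (h + 1) s' := by
      simp only [dotProduct, mul_add, mul_sub, Finset.sum_add_distrib, Finset.sum_sub_distrib,
        Finset.mul_sum, sub_mul, Finset.sum_mul]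
      congr 2 <;> rw [Finset.sum_comm] <;> simp only [mul_assoc]
    rw [hlin, hQhat h hh, hQstar h hh, hr h hh, hrhat h hh]
    simp only [← hP h hh, ← hPhat h hh, mul_sub, sub_mul, Finset.sum_sub_distrib]
    ring
  have hQstep : ∀ h ∈ Finset.Icc 1 H, ∀ c, (∀ s, |Vhat (h + 1) s - Vstar (h + 1) s| ≤ c) →
      ∀ s a, |Qhat h s a - Qstar h s a| ≤ e h + c := by
    intro h hh c hc s a
    rw [hstep h hh s a]
    refine (abs_add_le _ _).trans (add_le_add (he_le h s a) ?_)
    calc |∑ s', p h s a s' * (Vhat (h + 1) s' - Vstar (h + 1) s')|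
        ≤ ∑ s', |p h s a s' * (Vhat (h + 1) s' - Vstar (h + 1) s')| :=
          Finset.abs_sum_le_sum_abs _ _
      _ ≤ ∑ s', p h s a s' * c := by
          refine Finset.sum_le_sum fun s' _ => ?_
          rw [abs_mul, abs_of_nonneg (hp0 h hh s a s')]
          exact mul_le_mul_of_nonneg_left (hc s') (hp0 h hh s a s')
      _ = c := by rw [← Finset.sum_mul, hp1 h hh, one_mul]
  -- Backward induction: the error at step `h` is at most the sum of the Bellman errors from `h` on.
  have hVbound : ∀ h, h ≤ H + 1 → 1 ≤ h →
      ∀ s, |Vhat h s - Vstar h s| ≤ ∑ k ∈ Finset.Ico h (H + 1), e k := by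
    intro h hle
    induction hle using Nat.decreasingInduction with
    | self => intro _ s; simp [hVhatTop, hVstarTop]
    | of_succ h hlt ih =>
      intro h1 s
      have hh : h ∈ Finset.Icc 1 H := Finset.mem_Icc.2 ⟨h1, by omega⟩
      rw [hVhat h hh, hVstar h hh, Finset.sum_eq_sum_Ico_succ_bot hlt]
      exact abs_sup'_sub_sup'_le _ _ _ (hQstep h hh _ (ih (by omega)) s)
  have hQbound : ∀ h ∈ Finset.Icc 1 H, ∀ s a,
      |Qhat h s a - Qstar h s a| ≤ ∑ k ∈ Finset.Icc 1 H, e k := by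
    intro h hh s a
    obtain ⟨h1, h2⟩ := Finset.mem_Icc.1 hh
    refine (hQstep h hh _ (hVbound (h + 1) (by omega) (by omega)) s a).trans ?_
    rw [← Finset.sum_eq_sum_Ico_succ_bot (by omega : h < H + 1)]
    refine Finset.sum_le_sum_of_subset_of_nonneg (fun k hk => ?_) fun k _ _ => he0 k
    have := Finset.mem_Ico.1 hk
    exact Finset.mem_Icc.2 ⟨by omega, by omega⟩
  have hub := gap_le_gap_add_s13 H Vstar Vhat Qstar Qhat πstar πhat _ hVstar hVhat hπ hπhat hQbound
    T That hTdef hThatdef hT hThat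
  have hlb := gap_le_gap_add_s13 H Vhat Vstar Qhat Qstar πhat πstar _ hVhat hVstar hπhat hπ
    (fun h hh s a => by rw [abs_sub_comm]; exact hQbound h hh s a)
    That T hThatdef hTdef hThat hT
  rw [abs_le]
  constructor <;> linarith
end

section
/- Let M and M' be two linear discounted MDPs on (S, A) with common feature map φ : S×A → ℝ^d and common discount γ ∈ (0,1), with parameters (θ_M, μ_M) and (θ_{M'}, μ_{M'}), and with reward distributions q_M(s,a) and q_{M'}(s,a) that are probability measures supported on [0,1] with means r_M(s,a) = φ(s,a)ᵀθ_M and r_{M'}(s,a) = φ(s,a)ᵀθ_{M'} respectively. Then for every probability vector ω on S×A: Σ_{(s,a)∈S×A} ω(s,a)·KL_{M|M'}(s,a) ≥ (6(1−γ)²/5)·‖θ_M − θ_{M'} + γ·Σ_{s'∈S} (μ_M(s') − μ_{M'}(s'))·V*_M(s')‖²_{Λ(ω)}. -/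
/-!
Write `Δ(s,a) = r - r' + γ ∑ (p - p') V*`. By linearity `Δ(s,a)` is the inner product of `φ(s,a)`
with the parameter vector of the theorem, so the quadratic form is `∑ ω Δ²`, and it suffices to
bound each `KL(s,a)` from below by `6/5 (1-γ)² Δ²`.

A Pinsker inequality for `[0,1]`-valued variables, `KL ≥ 2 (difference of means)²`, follows from
the variational bound `KL(α‖β) ≥ ∫ f dα - log ∫ exp f dβ` with `f(x) = t x`, Hoeffding's lemma and
the choice `t = 4 (difference of means)`; this is `two_mul_sq_le_klDiv` for measures on `ℝ` and
`two_mul_sq_le_klFin` for probability vectors. It applies to the rewards, and to the transitions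
with the test function `(1-γ) V*`, which is `[0,1]`-valued because rewards are. With `x` and `y` the
two differences of means, `(1-γ) Δ = (1-γ) x + γ y`, and convexity of the square gives
`(1-γ)² Δ² ≤ x² + y² ≤ KL / 2`.
-/

open Matrix Finset MeasureTheory
open scoped Classical

/-- Kullback–Leibler divergence between probability vectors on a finite set. -/
noncomputable def klFin {S : Type*} [Fintype S] (p q : S → ℝ) : EReal :=
  if ∀ s, q s = 0 → p s = 0
  then ((∑ s, p s * Real.log (p s / q s) : ℝ) : EReal) else ⊤

/-- Hoeffding's lemma for a probability measure carried by `[0,1]`, in uncentred form. -/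
lemma hoeffding_Icc (β : Measure ℝ) [IsProbabilityMeasure β]
    (hβ : β (Set.Icc (0 : ℝ) 1)ᶜ = 0) (t : ℝ) :
    Integrable (fun x => Real.exp (t * x)) β ∧
      ∫ x, Real.exp (t * x) ∂β ≤ Real.exp (t * (∫ x, x ∂β) + t ^ 2 / 8) := by
  have hb : ∀ᵐ x ∂β, x ∈ Set.Icc (0 : ℝ) 1 := by rwa [ae_iff]
  have h := ProbabilityTheory.hasSubgaussianMGF_of_mem_Icc (X := fun x : ℝ => x) (μ := β)
    aemeasurable_id hb
  have heq : (fun x : ℝ => Real.exp (t * x)) = fun x : ℝ =>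
      Real.exp (t * (∫ x, x ∂β)) * Real.exp (t * (x - ∫ x, x ∂β)) := by
    funext x
    rw [← Real.exp_add]
    ring_nf
  refine ⟨?_, ?_⟩
  · rw [heq]
    exact (h.integrable_exp_mul t).const_mul _
  · have h2 := h.mgf_le t
    simp only [ProbabilityTheory.mgf] at h2
    rw [heq, integral_const_mul, Real.exp_add]
    refine mul_le_mul_of_nonneg_left (h2.trans (Real.exp_le_exp.2 (le_of_eq ?_)))
      (Real.exp_pos _).le
    simp
    ring

lemma two_mul_sq_le_klDiv (α β : Measure ℝ) [IsProbabilityMeasure α] [IsProbabilityMeasure β]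
    (hα : α (Set.Icc (0 : ℝ) 1)ᶜ = 0) (hβ : β (Set.Icc (0 : ℝ) 1)ᶜ = 0) :
    ((2 * ((∫ x, x ∂α) - ∫ x, x ∂β) ^ 2 : ℝ) : EReal) ≤ klDiv α β := by
  unfold klDiv
  split_ifs with h
  swap
  · exact le_top
  obtain ⟨hac, hint⟩ := h
  rw [EReal.coe_le_coe_iff]
  set t : ℝ := 4 * ((∫ x, x ∂α) - ∫ x, x ∂β) with ht
  obtain ⟨hexp, hle⟩ := hoeffding_Icc β hβ t
  have hb : ∀ᵐ x ∂α, x ∈ Set.Icc (0 : ℝ) 1 := by rwa [ae_iff]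
  have hid : Integrable (fun x : ℝ => x) α := Integrable.of_mem_Icc 0 1 aemeasurable_id hb
  have hf : Integrable (fun x : ℝ => t * x) α := hid.const_mul t
  -- The variational bound is nonnegativity of the divergence from `α` to the tilted measure.
  have hprob : IsProbabilityMeasure (β.tilted fun x => t * x) := isProbabilityMeasure_tilted hexp
  have hac' : α ≪ β.tilted fun x => t * x := hac.trans (absolutelyContinuous_tilted hexp)
  have hnn := InformationTheory.toReal_klDiv_of_measure_eq hac' (by simp)
  rw [integral_llr_tilted_right hac hf hexp hint, integral_const_mul] at hnn
  have h0 : 0 ≤ (InformationTheory.klDiv α (β.tilted fun x => t * x)).toReal :=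
    ENNReal.toReal_nonneg
  have hlog : Real.log (∫ x, Real.exp (t * x) ∂β) ≤ t * (∫ x, x ∂β) + t ^ 2 / 8 := by
    rw [Real.log_le_iff_le_exp (integral_exp_pos hexp)]
    exact hle
  rw [hnn] at h0
  nlinarith

/-- The Fenchel–Young inequality for `p log (p / q)`. -/
lemma fenchel_mul_log (p q y : ℝ) (hp : 0 ≤ p) (hq : 0 ≤ q) (h : q = 0 → p = 0) :
    p * y + p - q * Real.exp y ≤ p * Real.log (p / q) := by
  rcases hp.eq_or_lt with rfl | hp
  · have := mul_nonneg hq (Real.exp_pos y).le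
    simp
    linarith
  have hq : 0 < q := lt_of_le_of_ne hq fun h0 => hp.ne' (h h0.symm)
  have h1 := Real.add_one_le_exp (y - Real.log (p / q))
  rw [Real.exp_sub, Real.exp_log (div_pos hp hq)] at h1
  have h2 := mul_le_mul_of_nonneg_left h1 hp.le
  have h3 : p * (Real.exp y / (p / q)) = q * Real.exp y := by field_simp
  linarith

lemma two_mul_sq_le_klFin {S : Type*} [Fintype S] (p q W : S → ℝ)
    (hp0 : ∀ s, 0 ≤ p s) (hp1 : ∑ s, p s = 1) (hq0 : ∀ s, 0 ≤ q s) (hq1 : ∑ s, q s = 1)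
    (hW : ∀ s, W s ∈ Set.Icc (0 : ℝ) 1) :
    ((2 * (∑ s, p s * W s - ∑ s, q s * W s) ^ 2 : ℝ) : EReal) ≤ klFin p q := by
  unfold klFin
  split_ifs with h
  swap
  · exact le_top
  rw [EReal.coe_le_coe_iff]
  -- The law of `W` under `q`, to which Hoeffding's lemma applies.
  let β : Measure ℝ := ∑ s, ENNReal.ofReal (q s) • Measure.dirac (W s)
  have hint : ∀ f : ℝ → ℝ, ∫ x, f x ∂β = ∑ s, q s * f (W s) := by
    intro f
    have hi : ∀ s ∈ (univ : Finset S),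
        Integrable f (ENNReal.ofReal (q s) • Measure.dirac (W s)) := by
      intro s _
      exact (integrable_dirac (by simp)).smul_measure ENNReal.ofReal_ne_top
    rw [integral_finsetSum_measure hi]
    refine Finset.sum_congr rfl fun s _ => ?_
    rw [integral_smul_measure, integral_dirac, ENNReal.toReal_ofReal (hq0 s), smul_eq_mul]
  have hprob : IsProbabilityMeasure β := by
    constructor
    simp only [β, Measure.coe_finsetSum, Finset.sum_apply, Measure.smul_apply, measure_univ,
      smul_eq_mul, mul_one]
    rw [← ENNReal.ofReal_sum_of_nonneg fun s _ => hq0 s, hq1, ENNReal.ofReal_one]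
  have hβ : β (Set.Icc (0 : ℝ) 1)ᶜ = 0 := by
    simp only [β, Measure.coe_finsetSum, Finset.sum_apply, Measure.smul_apply, smul_eq_mul]
    refine Finset.sum_eq_zero fun s _ => ?_
    rw [Measure.dirac_apply' _ measurableSet_Icc.compl]
    simp [(hW s).1, (hW s).2]
  set m := ∑ s, p s * W s with hm
  set m' := ∑ s, q s * W s with hm'
  set t : ℝ := 4 * (m - m') with ht
  have hle := (hoeffding_Icc β hβ t).2
  rw [hint fun x => Real.exp (t * x), hint fun x => x] at hle
  set c := t * m' + t ^ 2 / 8 with hc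
  have hsum : ∑ s, q s * Real.exp (t * W s - c) ≤ 1 := by
    have : ∀ s, q s * Real.exp (t * W s - c) = q s * Real.exp (t * W s) / Real.exp c := by
      intro s
      rw [Real.exp_sub, mul_div_assoc]
    simp_rw [this]
    rw [← Finset.sum_div, div_le_one (Real.exp_pos c)]
    exact hle
  have hF := Finset.sum_le_sum fun s (_ : s ∈ (univ : Finset S)) =>
    fenchel_mul_log (p s) (q s) (t * W s - c) (hp0 s) (hq0 s) (h s)
  have hlin : ∑ s, p s * (t * W s - c) = t * m - c := by
    have : ∀ s, p s * (t * W s - c) = t * (p s * W s) - p s * c := fun s => by ring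
    simp_rw [this]
    rw [Finset.sum_sub_distrib, ← Finset.mul_sum, ← Finset.sum_mul, hp1, one_mul]
  rw [Finset.sum_sub_distrib, Finset.sum_add_distrib, hlin, hp1] at hF
  nlinarith

/-- Rewards in `[0,1]` confine the optimal value function to `[0, 1/(1-γ)]`: evaluate the Bellman
equation at a state where the value function is extremal. -/
lemma one_sub_mul_value_mem_Icc {S A : Type*} [Fintype S] [Fintype A] [Nonempty S] [Nonempty A]
    (γ : ℝ) (hγ : γ ∈ Set.Ioo (0 : ℝ) 1) (p : S → A → S → ℝ) (r : S → A → ℝ)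
    (hp0 : ∀ s a s', 0 ≤ p s a s') (hp1 : ∀ s a, ∑ s', p s a s' = 1)
    (hr : ∀ s a, r s a ∈ Set.Icc (0 : ℝ) 1)
    (V : S → ℝ) (Q : S → A → ℝ)
    (hQ : ∀ s a, Q s a = r s a + γ * ∑ s', p s a s' * V s')
    (hV : ∀ s, V s = univ.sup' univ_nonempty fun a => Q s a) (s : S) :
    (1 - γ) * V s ∈ Set.Icc (0 : ℝ) 1 := by
  have hγ1 : 0 ≤ 1 - γ := by linarith [hγ.2]
  obtain ⟨s₀, h₀⟩ := Finite.exists_min V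
  obtain ⟨s₁, h₁⟩ := Finite.exists_max V
  constructor
  · let a : A := Classical.arbitrary A
    have hle : Q s₀ a ≤ V s₀ := by
      rw [hV s₀]
      exact Finset.le_sup' (fun a => Q s₀ a) (mem_univ a)
    have hs : V s₀ ≤ ∑ s', p s₀ a s' * V s' := by
      calc V s₀ = ∑ s', p s₀ a s' * V s₀ := by rw [← Finset.sum_mul, hp1, one_mul]
        _ ≤ _ := Finset.sum_le_sum fun s' _ => mul_le_mul_of_nonneg_left (h₀ s') (hp0 _ _ _)
    rw [hQ] at hle
    have := mul_le_mul_of_nonneg_left hs hγ.1.le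
    have := mul_le_mul_of_nonneg_left (h₀ s) hγ1
    linarith [(hr s₀ a).1]
  · obtain ⟨a, -, ha⟩ := Finset.exists_mem_eq_sup' (univ_nonempty (α := A)) fun a => Q s₁ a
    rw [← hV s₁] at ha
    have hs : ∑ s', p s₁ a s' * V s' ≤ V s₁ := by
      calc _ ≤ ∑ s', p s₁ a s' * V s₁ :=
            Finset.sum_le_sum fun s' _ => mul_le_mul_of_nonneg_left (h₁ s') (hp0 _ _ _)
        _ = V s₁ := by rw [← Finset.sum_mul, hp1, one_mul]
    rw [hQ] at ha
    have := mul_le_mul_of_nonneg_left hs hγ.1.le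
    have := mul_le_mul_of_nonneg_left (h₁ s) hγ1
    linarith [(hr s₁ a).2]

lemma EReal_coe_finset_sum {ι : Type*} (s : Finset ι) (f : ι → ℝ) :
    ((∑ i ∈ s, f i : ℝ) : EReal) = ∑ i ∈ s, (f i : EReal) := by
  induction s using Finset.induction_on with
  | empty => simp
  | insert a s ha ih => rw [Finset.sum_insert ha, Finset.sum_insert ha, EReal.coe_add, ih]

theorem stmt_14 {S A : Type*} [Fintype S] [Fintype A] [Nonempty S] [Nonempty A]
    {d : ℕ} (φ : S → A → Fin d → ℝ) (γ : ℝ) (hγ : γ ∈ Set.Ioo (0 : ℝ) 1)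
    (p p' : S → A → S → ℝ) (r r' : S → A → ℝ)
    (hp0 : ∀ s a s', 0 ≤ p s a s') (hp1 : ∀ s a, ∑ s', p s a s' = 1)
    (hp0' : ∀ s a s', 0 ≤ p' s a s') (hp1' : ∀ s a, ∑ s', p' s a s' = 1)
    (θ θ' : Fin d → ℝ) (μ μ' : S → Fin d → ℝ)
    (hr : ∀ s a, r s a = φ s a ⬝ᵥ θ) (hP : ∀ s a s', p s a s' = φ s a ⬝ᵥ μ s')
    (hr' : ∀ s a, r' s a = φ s a ⬝ᵥ θ') (hP' : ∀ s a s', p' s a s' = φ s a ⬝ᵥ μ' s')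
    -- reward distributions, supported on [0,1], with means r and r'
    (q q' : S → A → Measure ℝ)
    (hq : ∀ s a, IsProbabilityMeasure (q s a))
    (hq' : ∀ s a, IsProbabilityMeasure (q' s a))
    (hqsupp : ∀ s a, q s a (Set.Icc (0 : ℝ) 1)ᶜ = 0)
    (hqsupp' : ∀ s a, q' s a (Set.Icc (0 : ℝ) 1)ᶜ = 0)
    (hqmean : ∀ s a, (∫ x, x ∂q s a) = r s a)
    (hqmean' : ∀ s a, (∫ x, x ∂q' s a) = r' s a)
    -- optimal value functions of M
    (Vstar : S → ℝ) (Qstar : S → A → ℝ)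
    (hQstar : ∀ s a, Qstar s a = r s a + γ * ∑ s', p s a s' * Vstar s')
    (hVstar : ∀ s, Vstar s = univ.sup' univ_nonempty fun a => Qstar s a)
    -- a probability vector on S × A
    (ω : S × A → ℝ) (hω0 : ∀ sa, 0 ≤ ω sa) (hω1 : ∑ sa, ω sa = 1) :
    (((6 * (1 - γ) ^ 2 / 5) *
        ((fun i => θ i - θ' i + γ * ∑ s', (μ s' i - μ' s' i) * Vstar s') ⬝ᵥ
          (∑ sa : S × A, ω sa • vecMulVec (φ sa.1 sa.2) (φ sa.1 sa.2)).mulVec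
            fun i => θ i - θ' i + γ * ∑ s', (μ s' i - μ' s' i) * Vstar s') : ℝ) : EReal) ≤
      ∑ sa : S × A, ((ω sa : ℝ) : EReal) *
        (klDiv (q sa.1 sa.2) (q' sa.1 sa.2) +
          klFin (p sa.1 sa.2) (p' sa.1 sa.2)) := by
  have hrange : ∀ s a, r s a ∈ Set.Icc (0 : ℝ) 1 := by
    intro s a
    have := hq s a
    have hb : ∀ᵐ x ∂q s a, x ∈ Set.Icc (0 : ℝ) 1 := by
      rw [ae_iff]
      exact hqsupp s a
    have hid : Integrable (fun x : ℝ => x) (q s a) := Integrable.of_mem_Icc 0 1 aemeasurable_id hb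
    rw [← hqmean]
    refine ⟨integral_nonneg_of_ae (hb.mono fun x hx => hx.1), ?_⟩
    have := integral_mono_ae hid (integrable_const (1 : ℝ)) (hb.mono fun x hx => hx.2)
    simpa using this
  have hV := one_sub_mul_value_mem_Icc γ hγ p r hp0 hp1 hrange Vstar Qstar hQstar hVstar
  set v : Fin d → ℝ := fun i => θ i - θ' i + γ * ∑ s', (μ s' i - μ' s' i) * Vstar s' with hv
  have hdot : ∀ s a, φ s a ⬝ᵥ v = r s a - r' s a +
      γ * (∑ s', p s a s' * Vstar s' - ∑ s', p' s a s' * Vstar s') := by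
    intro s a
    have hvec : v = θ - θ' + γ • ∑ s', Vstar s' • (μ s' - μ' s') := by
      ext i
      simp [hv, Finset.sum_apply, mul_comm]
    rw [hvec, dotProduct_add, dotProduct_sub, dotProduct_smul, dotProduct_sum, hr, hr',
      ← Finset.sum_sub_distrib, smul_eq_mul]
    congr 2
    refine Finset.sum_congr rfl fun s' _ => ?_
    rw [dotProduct_smul, dotProduct_sub, hP, hP', smul_eq_mul]
    ring
  have hquad : v ⬝ᵥ (∑ sa : S × A, ω sa • vecMulVec (φ sa.1 sa.2) (φ sa.1 sa.2)).mulVec v =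
      ∑ sa : S × A, ω sa * (φ sa.1 sa.2 ⬝ᵥ v) ^ 2 := by
    rw [Matrix.sum_mulVec, dotProduct_sum]
    refine Finset.sum_congr rfl fun sa _ => ?_
    rw [Matrix.smul_mulVec, dotProduct_smul, vecMulVec_mulVec, op_smul_eq_smul, dotProduct_smul,
      dotProduct_comm v, smul_eq_mul, smul_eq_mul]
    ring
  rw [hquad, Finset.mul_sum, EReal_coe_finset_sum]
  refine Finset.sum_le_sum fun sa _ => ?_
  obtain ⟨s, a⟩ := sa
  have := hq s a
  have := hq' s a
  have h1 := two_mul_sq_le_klDiv (q s a) (q' s a) (hqsupp s a) (hqsupp' s a)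
  have h2 := two_mul_sq_le_klFin (p s a) (p' s a) (fun s' => (1 - γ) * Vstar s')
    (hp0 s a) (hp1 s a) (hp0' s a) (hp1' s a) hV
  rw [hqmean, hqmean'] at h1
  have hpull : ∀ P : S → ℝ, ∑ s', P s' * ((1 - γ) * Vstar s') =
      (1 - γ) * ∑ s', P s' * Vstar s' := by
    intro P
    rw [Finset.mul_sum]
    exact Finset.sum_congr rfl fun s' _ => by ring
  rw [hpull, hpull] at h2
  have hcoef : 6 * (1 - γ) ^ 2 / 5 * (ω (s, a) * (φ s a ⬝ᵥ v) ^ 2) =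
      ω (s, a) * (6 * (1 - γ) ^ 2 / 5 * (φ s a ⬝ᵥ v) ^ 2) := by ring
  simp only
  rw [hcoef, EReal.coe_mul]
  refine mul_le_mul_of_nonneg_left (le_trans ?_ (add_le_add h1 h2))
    (EReal.coe_nonneg.2 (hω0 (s, a)))
  rw [← EReal.coe_add, EReal.coe_le_coe_iff, hdot]
  generalize r s a - r' s a = x
  rw [← mul_sub]
  generalize ∑ s', p s a s' * Vstar s' - ∑ s', p' s a s' * Vstar s' = z
  obtain ⟨hγ0, hγ1⟩ := hγ
  have hsq : ((1 - γ) * (x + γ * z)) ^ 2 ≤ x ^ 2 + ((1 - γ) * z) ^ 2 := by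
    have hconv : (1 - γ) * x ^ 2 + γ * ((1 - γ) * z) ^ 2 - ((1 - γ) * (x + γ * z)) ^ 2 =
        γ * (1 - γ) * (x - (1 - γ) * z) ^ 2 := by ring
    have h3 : 0 ≤ γ * (1 - γ) * (x - (1 - γ) * z) ^ 2 :=
      mul_nonneg (mul_nonneg hγ0.le (by linarith)) (sq_nonneg _)
    have h4 := mul_nonneg hγ0.le (sq_nonneg x)
    have h5 := mul_nonneg (sub_nonneg.2 hγ1.le) (sq_nonneg ((1 - γ) * z))
    linarith
  have h6 : 6 * (1 - γ) ^ 2 / 5 * (x + γ * z) ^ 2 = 6 / 5 * ((1 - γ) * (x + γ * z)) ^ 2 := by ring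
  rw [h6]
  linarith [sq_nonneg x, sq_nonneg ((1 - γ) * z)]
end

section
/- Let M and M' be two linear discounted MDPs on (S, A) with common feature map φ : S×A → ℝ^d and common discount γ ∈ (0,1), with parameters (θ_M, μ_M) and (θ_{M'}, μ_{M'}) respectively. Let ε > 0, suppose M has a unique optimal policy π*_M (for every s, Q*_M(s,·) has a unique maximizer), and suppose π*_M is not ε-optimal for M'. Then Δ(M) + ε ≤ (2/(1−γ))·max_{(s,a)∈S×A} |φ(s,a)ᵀ(θ_M − θ_{M'} + γ·Σ_{s'∈S} (μ_M(s') − μ_{M'}(s'))·V*_M(s'))|. -/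
/-!
Let `D s a = r s a - r' s a + γ ∑ (p - p') V*` be the Bellman error of `V*` between the two models
and `B` its largest absolute value; linearity identifies `D s a` with the inner product in the
statement. Then `Q*(s,a) = D s a + r' s a + γ ∑ p' V*`, so a contraction argument
(`le_div_of_le_discounted`) gives `Q'* - Q* ≤ B / (1-γ)` and `V* - V'^{π*} ≤ B / (1-γ)`.

Choose a state `s` maximizing the loss `g = V'* - V'^{π*}`, so that `g s > ε > 0`, and an action `a`
optimal for `M'` at `s`. If `a = π* s`, then `g s` would be `γ` times an average of `g`, hence at
most `γ * g s`, which is impossible. So `a ≠ π* s`, the pair `(s, a)` enters the minimum defining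
the gap, and
`g s = (Q'*(s,a) - Q*(s,a)) + (Q*(s,a) - V* s) + (V* s - V'^{π*} s) ≤ 2 B / (1-γ) - Δ`.
-/

open Matrix Finset

theorem weighted_avg_le {S : Type*} [Fintype S] {q f : S → ℝ} {m : ℝ}
    (hq0 : ∀ s, 0 ≤ q s) (hq1 : ∑ s, q s = 1) (hf : ∀ s, f s ≤ m) : ∑ s, q s * f s ≤ m := by
  calc ∑ s, q s * f s ≤ ∑ s, q s * m :=
        Finset.sum_le_sum fun s _ => mul_le_mul_of_nonneg_left (hf s) (hq0 s)
    _ = m := by rw [← Finset.sum_mul, hq1, one_mul]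

/-- A function bounded at each state by `B` plus a discounted average of itself is bounded by
`B / (1 - γ)`; the averaging action `a` may depend on the state. -/
theorem le_div_of_le_discounted {S A : Type*} [Fintype S] [Nonempty S] {γ B : ℝ}
    (hγ : γ ∈ Set.Ioo (0 : ℝ) 1) {p : S → A → S → ℝ} (hp0 : ∀ s a s', 0 ≤ p s a s')
    (hp1 : ∀ s a, ∑ s', p s a s' = 1) {f : S → ℝ}
    (hf : ∀ s, ∃ a, f s ≤ B + γ * ∑ s', p s a s' * f s') (s : S) : f s ≤ B / (1 - γ) := by
  obtain ⟨s₀, hs₀⟩ := Finite.exists_max f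
  obtain ⟨a, ha⟩ := hf s₀
  have h := mul_le_mul_of_nonneg_left (weighted_avg_le (hp0 s₀ a) (hp1 s₀ a) hs₀) hγ.1.le
  refine (hs₀ s).trans ?_
  rw [le_div_iff₀ (by linarith [hγ.2])]
  linarith

theorem stmt_15 {S A : Type*} [Fintype S] [Fintype A] [Nonempty S] [Nonempty A]
    [DecidableEq A]
    {d : ℕ} (φ : S → A → Fin d → ℝ) (γ : ℝ) (hγ : γ ∈ Set.Ioo (0 : ℝ) 1)
    (ε : ℝ) (hε : 0 < ε)
    (p p' : S → A → S → ℝ) (r r' : S → A → ℝ)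
    (hp0 : ∀ s a s', 0 ≤ p s a s') (hp1 : ∀ s a, ∑ s', p s a s' = 1)
    (hp0' : ∀ s a s', 0 ≤ p' s a s') (hp1' : ∀ s a, ∑ s', p' s a s' = 1)
    (θ θ' : Fin d → ℝ) (μ μ' : S → Fin d → ℝ)
    (hr : ∀ s a, r s a = φ s a ⬝ᵥ θ) (hP : ∀ s a s', p s a s' = φ s a ⬝ᵥ μ s')
    (hr' : ∀ s a, r' s a = φ s a ⬝ᵥ θ') (hP' : ∀ s a s', p' s a s' = φ s a ⬝ᵥ μ' s')
    -- optimal value functions of M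
    (Vstar : S → ℝ) (Qstar : S → A → ℝ)
    (hQstar : ∀ s a, Qstar s a = r s a + γ * ∑ s', p s a s' * Vstar s')
    (hVstar : ∀ s, Vstar s = univ.sup' univ_nonempty fun a => Qstar s a)
    -- optimal value functions of M'
    (V'star : S → ℝ) (Q'star : S → A → ℝ)
    (hQ'star : ∀ s a, Q'star s a = r' s a + γ * ∑ s', p' s a s' * V'star s')
    (hV'star : ∀ s, V'star s = univ.sup' univ_nonempty fun a => Q'star s a)
    -- unique optimal policy of M
    (πstar : S → A)
    (hπ : ∀ s a, a ≠ πstar s → Qstar s a < Qstar s (πstar s))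
    -- value functions of πstar in M'
    (Vpi' : S → ℝ) (Qpi' : S → A → ℝ)
    (hQpi' : ∀ s a, Qpi' s a = r' s a + γ * ∑ s', p' s a s' * Vpi' s')
    (hVpi' : ∀ s, Vpi' s = Qpi' s (πstar s))
    -- πstar is not ε-optimal for M'
    (hnotopt : ¬ ∀ s, V'star s - ε ≤ Vpi' s)
    -- the suboptimality gap of M
    (T : Finset (S × A)) (hTdef : T = univ.filter fun sa : S × A => sa.2 ≠ πstar sa.1)
    (hT : T.Nonempty) :
    T.inf' hT (fun sa => Vstar sa.1 - Qstar sa.1 sa.2) + ε ≤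
      (2 / (1 - γ)) *
        (univ.sup' univ_nonempty fun sa : S × A =>
          |φ sa.1 sa.2 ⬝ᵥ fun i =>
            θ i - θ' i + γ * ∑ s', (μ s' i - μ' s' i) * Vstar s'|) := by
  obtain ⟨hγ0, hγ1⟩ := hγ
  have h1γ : 0 < 1 - γ := by linarith
  set B := univ.sup' univ_nonempty fun sa : S × A =>
          |φ sa.1 sa.2 ⬝ᵥ fun i =>
            θ i - θ' i + γ * ∑ s', (μ s' i - μ' s' i) * Vstar s'| with hB
  have hlin : ∀ s a, (φ s a ⬝ᵥ fun i =>
      θ i - θ' i + γ * ∑ s', (μ s' i - μ' s' i) * Vstar s') =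
      Qstar s a - (r' s a + γ * ∑ s', p' s a s' * Vstar s') := by
    intro s a
    have hsum : ∑ i, φ s a i * ∑ s', (μ s' i - μ' s' i) * Vstar s' =
        ∑ s', p s a s' * Vstar s' - ∑ s', p' s a s' * Vstar s' := by
      simp only [hP, hP', dotProduct, Finset.mul_sum]
      rw [Finset.sum_comm, ← Finset.sum_sub_distrib]
      refine Finset.sum_congr rfl fun s' _ => ?_
      rw [Finset.sum_mul, Finset.sum_mul, ← Finset.sum_sub_distrib]
      exact Finset.sum_congr rfl fun i _ => by ring
    rw [hQstar, hr, hr']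
    have hsplit : (φ s a ⬝ᵥ fun i =>
        θ i - θ' i + γ * ∑ s', (μ s' i - μ' s' i) * Vstar s') =
        φ s a ⬝ᵥ θ - φ s a ⬝ᵥ θ' +
          γ * ∑ i, φ s a i * ∑ s', (μ s' i - μ' s' i) * Vstar s' := by
      simp only [dotProduct]
      rw [Finset.mul_sum, ← Finset.sum_sub_distrib, ← Finset.sum_add_distrib]
      exact Finset.sum_congr rfl fun i _ => by ring
    rw [hsplit, hsum]
    ring
  have hD : ∀ s a, |Qstar s a - (r' s a + γ * ∑ s', p' s a s' * Vstar s')| ≤ B := by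
    intro s a
    rw [← hlin s a, hB]
    exact Finset.le_sup' (fun sa : S × A => |φ sa.1 sa.2 ⬝ᵥ fun i =>
      θ i - θ' i + γ * ∑ s', (μ s' i - μ' s' i) * Vstar s'|) (Finset.mem_univ (s, a))
  have hVle : ∀ s a, Qstar s a ≤ Vstar s := fun s a => by
    rw [hVstar]
    exact Finset.le_sup' (fun a => Qstar s a) (Finset.mem_univ a)
  have hVpi : ∀ s, Vstar s = Qstar s (πstar s) := by
    intro s
    refine le_antisymm ?_ (hVle s _)
    rw [hVstar]
    refine Finset.sup'_le _ _ fun a _ => ?_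
    by_cases h : a = πstar s
    · rw [h]
    · exact (hπ s a h).le
  have hV'max : ∀ s, ∃ a, V'star s = Q'star s a := by
    intro s
    obtain ⟨a, -, ha⟩ := Finset.exists_mem_eq_sup' (univ_nonempty (α := A)) fun a => Q'star s a
    exact ⟨a, (hV'star s).trans ha⟩
  have hsub : ∀ (s : S) (a : A) (f g : S → ℝ), ∑ s', p' s a s' * (f s' - g s') =
      ∑ s', p' s a s' * f s' - ∑ s', p' s a s' * g s' := fun s a f g => by
    simp only [mul_sub, Finset.sum_sub_distrib]
  have hQdiff : ∀ s a, Q'star s a - Qstar s a ≤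
      B + γ * ∑ s', p' s a s' * (V'star s' - Vstar s') := by
    intro s a
    have h := (abs_le.1 (hD s a)).1
    rw [hsub, hQ'star]
    linarith
  have hV : ∀ s, V'star s - Vstar s ≤ B / (1 - γ) := by
    refine le_div_of_le_discounted ⟨hγ0, hγ1⟩ hp0' hp1' fun s => ?_
    obtain ⟨a, ha⟩ := hV'max s
    exact ⟨a, by linarith [hQdiff s a, hVle s a]⟩
  have hQ : ∀ s a, Q'star s a - Qstar s a ≤ B / (1 - γ) := by
    intro s a
    have h := mul_le_mul_of_nonneg_left (weighted_avg_le (hp0' s a) (hp1' s a) hV) hγ0.le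
    have hfix : B + γ * (B / (1 - γ)) = B / (1 - γ) := by
      field_simp
      ring
    linarith [hQdiff s a]
  have hVV : ∀ s, Vstar s - Vpi' s ≤ B / (1 - γ) := by
    refine le_div_of_le_discounted ⟨hγ0, hγ1⟩ hp0' hp1' fun s => ⟨πstar s, ?_⟩
    have h := (abs_le.1 (hD s (πstar s))).2
    rw [hsub, hVpi', hQpi', hVpi s]
    linarith
  obtain ⟨s, hs⟩ := Finite.exists_max fun s => V'star s - Vpi' s
  push Not at hnotopt
  obtain ⟨s₁, hs₁⟩ := hnotopt
  have hg : ε < V'star s - Vpi' s := by linarith [hs s₁]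
  obtain ⟨a, ha⟩ := hV'max s
  have hne : a ≠ πstar s := by
    intro h
    have h1 := mul_le_mul_of_nonneg_left (weighted_avg_le (hp0' s a) (hp1' s a) hs) hγ0.le
    have h2 : V'star s - Vpi' s = γ * ∑ s', p' s a s' * (V'star s' - Vpi' s') := by
      rw [hsub, ha, hVpi', ← h, hQ'star, hQpi']
      ring
    nlinarith
  have hgap : T.inf' hT (fun sa => Vstar sa.1 - Qstar sa.1 sa.2) ≤ Vstar s - Qstar s a :=
    Finset.inf'_le (fun sa : S × A => Vstar sa.1 - Qstar sa.1 sa.2) (b := (s, a))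
      (by simp [hTdef, hne])
  have h2B : 2 / (1 - γ) * B = B / (1 - γ) + B / (1 - γ) := by ring
  rw [h2B]
  linarith [hQ s a, hVV s]
end
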